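/- Let S denote the set of all (finite) permutations, partially ordered by pattern containment, and let P be the element of the incidence algebra I(S) over ℚ defined by P(σ,π) = binom(π,σ). For every natural number d and all permutations σ ≤ π, the d-th convolution power of P satisfies P^d(σ,π) = d^{|π|−|σ|} · binom(π,σ) (with the convention 0^0 = 1, so that P^0 = δ). Moreover P is invertible and P^{−1}(σ,π) = (−1)^{|π|−|σ|} · binom(π,σ). -/

import Mathlib

/-- `patternCount π σ` is the number of occurrences of the pattern `σ` in the permutation `π`:
strictly increasing maps `φ` such that `π ∘ φ` is order-isomorphic to `σ`.  A permutation of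
`{1,…,n}` is modelled as an element of `Σ n, Equiv.Perm (Fin n)`. -/
def patternCount (π σ : Σ n, Equiv.Perm (Fin n)) : ℕ :=
  ((Finset.univ : Finset (Fin σ.1 → Fin π.1)).filter
    (fun φ => (∀ i j : Fin σ.1, i < j → φ i < φ j) ∧
      ∀ i j : Fin σ.1, σ.2 i < σ.2 j ↔ π.2 (φ i) < π.2 (φ j))).card

/-- The identity `δ` of the incidence algebra `I(S)` over `ℚ`. -/
def deltaP (σ π : Σ n, Equiv.Perm (Fin n)) : ℚ := if σ = π then 1 else 0

/-- Convolution in the incidence algebra `I(S)` of permutations under pattern containment: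
`(FG)(σ,π) = ∑_{σ ≤ τ ≤ π} F(σ,τ)·G(τ,π)`.  The permutations `τ` with `σ ≤ τ ≤ π` are
exactly the `τ` of size at most `|π|` with `patternCount τ σ > 0` and `patternCount π τ > 0`. -/
def convP (F G : (Σ n, Equiv.Perm (Fin n)) → (Σ n, Equiv.Perm (Fin n)) → ℚ)
    (σ π : Σ n, Equiv.Perm (Fin n)) : ℚ :=
  ∑ τ ∈ ((Finset.range (π.1 + 1)).sigma fun m =>
      (Finset.univ : Finset (Equiv.Perm (Fin m)))).filter
        (fun τ => 0 < patternCount τ σ ∧ 0 < patternCount π τ),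
    F σ τ * G τ π

/-- Convolution powers, with `F ^ 0 = δ`. -/
def convPowP (F : (Σ n, Equiv.Perm (Fin n)) → (Σ n, Equiv.Perm (Fin n)) → ℚ) :
    ℕ → (Σ n, Equiv.Perm (Fin n)) → (Σ n, Equiv.Perm (Fin n)) → ℚ
  | 0 => deltaP
  | ℓ + 1 => convP F (convPowP F ℓ)

/-- The element `H` of `I(S)`: `H(σ,π) = binom(π,σ)` if `|π| = |σ| + 1`, else `0`. -/
def HP (σ π : Σ n, Equiv.Perm (Fin n)) : ℚ :=
  if π.1 = σ.1 + 1 then (patternCount π σ : ℚ) else 0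

/-- The element `P` of `I(S)`: `P(σ,π) = binom(π,σ)`. -/
def PP (σ π : Σ n, Equiv.Perm (Fin n)) : ℚ := patternCount π σ
/-- The claimed inverse of `P` in `I(S)`: `P⁻¹(σ,π) = (−1)^{|π|−|σ|} · binom(π,σ)`. -/
def PPinv (σ π : Σ n, Equiv.Perm (Fin n)) : ℚ :=
  (-1 : ℚ) ^ (π.1 - σ.1) * patternCount π σ

/-- Occurrence predicate. -/
def OccP (π σ : Σ n, Equiv.Perm (Fin n)) (φ : Fin σ.1 → Fin π.1) : Prop :=
  (∀ i j : Fin σ.1, i < j → φ i < φ j) ∧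
      ∀ i j : Fin σ.1, σ.2 i < σ.2 j ↔ π.2 (φ i) < π.2 (φ j)

theorem OccP.mono {π σ : Σ n, Equiv.Perm (Fin n)} {φ : Fin σ.1 → Fin π.1} (h : OccP π σ φ) :
    StrictMono φ := fun i j hij => h.1 i j hij

theorem OccP.unique (π σ σ' : Σ n, Equiv.Perm (Fin n)) (φ : Fin σ.1 → Fin π.1)
    (φ' : Fin σ'.1 → Fin π.1) (h : OccP π σ φ) (h' : OccP π σ' φ')
    (e : Finset.univ.image φ = Finset.univ.image φ') : σ = σ' := by
  obtain ⟨k, s⟩ := σ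
  obtain ⟨m, s'⟩ := σ'
  have hk : k = m := by
    have := congrArg Finset.card e
    rwa [Finset.card_image_of_injective _ h.mono.injective,
      Finset.card_image_of_injective _ h'.mono.injective, Finset.card_univ, Finset.card_univ,
      Fintype.card_fin, Fintype.card_fin] at this
  subst hk
  have hφ : φ = φ' := by
    refine (StrictMono.range_inj h.mono h'.mono).1 ?_
    have := congrArg (fun s : Finset _ => (s : Set (Fin π.1))) e
    simpa using this
  subst hφ
  have key : ∀ i j, s i < s j ↔ s' i < s' j := fun i j => (h.2 i j).trans (h'.2 i j).symm
  have hm : StrictMono (fun i => s' (s.symm i)) := by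
    intro i j hij
    exact (key _ _).1 (by simpa using hij)
  have hid : (fun i => s' (s.symm i)) = id := by
    refine (StrictMono.range_inj hm strictMono_id).1 ?_
    rw [Set.range_id]
    exact ((s.symm.trans s').surjective).range_eq
  have : s = s' := by
    ext i
    have := congrFun hid (s i)
    simp at this
    rw [this]
  rw [this]

theorem exists_stP (π : Σ n, Equiv.Perm (Fin n)) (S : Finset (Fin π.1)) :
    ∃ σ : Σ n, Equiv.Perm (Fin n), ∃ φ : Fin σ.1 → Fin π.1,
      OccP π σ φ ∧ Finset.univ.image φ = S := by
  let f : Fin S.card → Fin π.1 := fun i => π.2 (S.orderEmbOfFin rfl i)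
  have hf : Function.Injective f := π.2.injective.comp (S.orderEmbOfFin rfl).injective
  have hs : StrictMono (f ∘ Tuple.sort f) :=
    (Tuple.monotone_sort f).strictMono_of_injective (hf.comp (Tuple.sort f).injective)
  refine ⟨⟨S.card, (Tuple.sort f).symm⟩, S.orderEmbOfFin rfl, ⟨?_, ?_⟩, ?_⟩
  · intro i j hij
    exact (S.orderEmbOfFin rfl).strictMono hij
  · intro i j
    have := hs.lt_iff_lt (a := (Tuple.sort f).symm i) (b := (Tuple.sort f).symm j)
    simp only [Function.comp, Equiv.apply_symm_apply] at this
    exact this.symm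
  · exact Finset.image_orderEmbOfFin_univ S rfl

open Classical in
theorem patternCount_eq (π τ σ : Σ n, Equiv.Perm (Fin n)) (ψ : Fin τ.1 → Fin π.1)
    (hψ : OccP π τ ψ) (st : Finset (Fin π.1) → Σ n, Equiv.Perm (Fin n))
    (hst : ∀ S, ∃ φ : Fin (st S).1 → Fin π.1, OccP π (st S) φ ∧ Finset.univ.image φ = S) :
    patternCount τ σ =
      ((Finset.univ : Finset (Finset (Fin π.1))).filter
        (fun S => S ⊆ Finset.univ.image ψ ∧ st S = σ)).card := by
  unfold patternCount
  have hcomp : ∀ φ : Fin σ.1 → Fin τ.1, OccP τ σ φ → OccP π σ (ψ ∘ φ) := by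
    intro φ hφ
    exact ⟨fun i j hij => hψ.1 _ _ (hφ.1 i j hij), fun i j => (hφ.2 i j).trans (hψ.2 _ _)⟩
  refine Finset.card_bij (fun φ _ => Finset.univ.image (ψ ∘ φ)) ?_ ?_ ?_
  · intro φ hφ
    have hφ : OccP τ σ φ := by simpa [OccP] using hφ
    simp only [Finset.mem_filter, Finset.mem_univ, true_and]
    refine ⟨?_, ?_⟩
    · intro x hx
      simp only [Finset.mem_image, Finset.mem_univ, true_and, Function.comp] at hx ⊢
      obtain ⟨a, ha⟩ := hx
      exact ⟨_, ha⟩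
    · obtain ⟨χ, hχ, hi⟩ := hst (Finset.univ.image (ψ ∘ φ))
      exact OccP.unique π _ _ χ (ψ ∘ φ) hχ (hcomp φ hφ) hi
  · intro φ hφ φ' hφ' e
    have hφ : OccP τ σ φ := by simpa [OccP] using hφ
    have hφ' : OccP τ σ φ' := by simpa [OccP] using hφ'
    have : ψ ∘ φ = ψ ∘ φ' := by
      refine (StrictMono.range_inj (hcomp _ hφ).mono (hcomp _ hφ').mono).1 ?_
      have := congrArg (fun s : Finset _ => (s : Set (Fin π.1))) e
      simpa only [Finset.coe_image, Finset.coe_univ, Set.image_univ] using this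
    exact hψ.mono.injective.comp_left this
  · intro S hS
    simp only [Finset.mem_filter, Finset.mem_univ, true_and] at hS
    obtain ⟨hS, rfl⟩ := hS
    obtain ⟨χ, hχ, hi⟩ := hst S
    have : ∀ i, ∃ a, ψ a = χ i := by
      intro i
      have : χ i ∈ S := by
        rw [← hi]
        exact Finset.mem_image_of_mem _ (Finset.mem_univ _)
      simpa using hS this
    choose φ hφ using this
    have hc : ψ ∘ φ = χ := funext hφ
    refine ⟨φ, ?_, ?_⟩
    · simp only [Finset.mem_filter, Finset.mem_univ, true_and]
      refine ⟨fun i j hij => ?_, fun i j => ?_⟩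
      · rw [← hψ.mono.lt_iff_lt, hφ, hφ]
        exact hχ.1 i j hij
      · rw [hψ.2, hφ, hφ]
        exact hχ.2 i j
    · rw [hc]
      exact hi

/-- The weighted element. -/
def PW (x : ℚ) (σ π : Σ n, Equiv.Perm (Fin n)) : ℚ := x ^ (π.1 - σ.1) * patternCount π σ

theorem sum_superset {n : ℕ} (x y : ℚ) (S : Finset (Fin n)) :
    ∑ T ∈ Finset.univ.filter (fun T : Finset (Fin n) => S ⊆ T),
      x ^ (T.card - S.card) * y ^ (n - T.card) = (x + y) ^ (n - S.card) := by
  have hc : (Sᶜ).card = n - S.card := by rw [Finset.card_compl, Fintype.card_fin]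
  rw [← hc, ← Finset.sum_pow_mul_eq_add_pow]
  refine Finset.sum_bij' (fun T _ => T \ S) (fun U _ => U ∪ S) ?_ ?_ ?_ ?_ ?_
  · intro T _
    rw [Finset.mem_powerset]
    intro a ha
    simp at ha ⊢
    exact ha.2
  · intro T _
    simp
  · intro T hT
    simp at hT
    exact Finset.sdiff_union_of_subset hT
  · intro U hU
    rw [Finset.mem_powerset] at hU
    ext a
    have := @hU a
    simp at this ⊢
    tauto
  · intro T hT
    simp at hT
    rw [Finset.card_sdiff_of_subset hT, hc]
    congr 2
    have := Finset.card_le_card hT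
    omega

theorem convP_PW (x y : ℚ) (σ π : Σ n, Equiv.Perm (Fin n)) :
    convP (PW x) (PW y) σ π = PW (x + y) σ π := by
  classical
  choose st φ hocc him using exists_stP π
  have hst : ∀ S, ∃ φ : Fin (st S).1 → Fin π.1, OccP π (st S) φ ∧ Finset.univ.image φ = S :=
    fun S => ⟨φ S, hocc S, him S⟩
  have hcard : ∀ S, (st S).1 = S.card := by
    intro S
    conv_rhs => rw [← him S]
    rw [Finset.card_image_of_injective _ (hocc S).mono.injective]
    simp
  have hA : ∀ τ, patternCount π τ = (Finset.univ.filter (fun S => st S = τ)).card := by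
    intro τ
    rw [patternCount_eq π π τ id ⟨fun _ _ h => h, fun _ _ => Iff.rfl⟩ st hst]
    simp
  have hB : ∀ T, patternCount (st T) σ =
      (Finset.univ.filter (fun S => S ⊆ T ∧ st S = σ)).card := by
    intro T
    rw [patternCount_eq π (st T) σ (φ T) (hocc T) st hst, him]
  have h1 : convP (PW x) (PW y) σ π =
      ∑ τ ∈ (Finset.range (π.1 + 1)).sigma fun m =>
        (Finset.univ : Finset (Equiv.Perm (Fin m))), PW x σ τ * PW y τ π := by
    unfold convP
    refine Finset.sum_filter_of_ne ?_
    intro τ _ hne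
    unfold PW at hne
    constructor
    · rw [Nat.pos_iff_ne_zero]; intro h; simp [h] at hne
    · rw [Nat.pos_iff_ne_zero]; intro h; simp [h] at hne
  have h2 : ∀ τ, PW x σ τ * PW y τ π =
      ∑ T ∈ Finset.univ.filter (fun T => st T = τ),
        x ^ (T.card - σ.1) * y ^ (π.1 - T.card) * patternCount (st T) σ := by
    intro τ
    have : ∀ T ∈ Finset.univ.filter (fun T => st T = τ),
        x ^ (T.card - σ.1) * y ^ (π.1 - T.card) * (patternCount (st T) σ : ℚ) =
        x ^ (τ.1 - σ.1) * y ^ (π.1 - τ.1) * patternCount τ σ := by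
      intro T hT
      simp only [Finset.mem_filter, Finset.mem_univ, true_and] at hT
      rw [← hcard T, hT]
    rw [Finset.sum_congr rfl this, Finset.sum_const, nsmul_eq_mul, ← hA]
    unfold PW
    ring
  rw [h1, Finset.sum_congr rfl (fun τ _ => h2 τ), Finset.sum_fiberwise_of_maps_to]
  · have h3 : ∀ T : Finset (Fin π.1),
        x ^ (T.card - σ.1) * y ^ (π.1 - T.card) * (patternCount (st T) σ : ℚ) =
        ∑ S ∈ Finset.univ.filter (fun S => st S = σ),
          if S ⊆ T then x ^ (T.card - S.card) * y ^ (π.1 - T.card) else 0 := by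
      intro T
      rw [hB, ← Finset.sum_filter, Finset.filter_filter]
      simp only [and_comm (a := _ ⊆ T)]
      rw [mul_comm, ← nsmul_eq_mul, ← Finset.sum_const]
      refine Finset.sum_congr rfl ?_
      intro S hS
      simp only [Finset.mem_filter, Finset.mem_univ, true_and] at hS
      rw [← hS.1, hcard]
    rw [Finset.sum_congr rfl (fun T _ => h3 T), Finset.sum_comm]
    have h4 : ∀ S ∈ Finset.univ.filter (fun S => st S = σ),
        (∑ T : Finset (Fin π.1),
          if S ⊆ T then x ^ (T.card - S.card) * y ^ (π.1 - T.card) else 0) =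
        (x + y) ^ (π.1 - σ.1) := by
      intro S hS
      simp only [Finset.mem_filter, Finset.mem_univ, true_and] at hS
      rw [← Finset.sum_filter, sum_superset, ← hS, hcard]
    rw [Finset.sum_congr rfl h4, Finset.sum_const, nsmul_eq_mul, ← hA]
    unfold PW
    ring
  · intro T _
    simp only [Finset.mem_sigma, Finset.mem_range, Finset.mem_univ, and_true]
    rw [hcard]
    have := Finset.card_le_univ T
    rw [Fintype.card_fin] at this
    omega

theorem PW_zero : PW 0 = deltaP := by
  classical
  funext σ π
  choose st φ hocc him using exists_stP π
  have hst : ∀ S, ∃ φ : Fin (st S).1 → Fin π.1, OccP π (st S) φ ∧ Finset.univ.image φ = S :=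
    fun S => ⟨φ S, hocc S, him S⟩
  have hcard : ∀ S, (st S).1 = S.card := by
    intro S
    conv_rhs => rw [← him S]
    rw [Finset.card_image_of_injective _ (hocc S).mono.injective]
    simp
  have hid : OccP π π id := ⟨fun _ _ h => h, fun _ _ => Iff.rfl⟩
  have huniv : st Finset.univ = π :=
    OccP.unique π _ _ _ id (hocc _) hid (by rw [him]; simp)
  have hA : ∀ τ, patternCount π τ = (Finset.univ.filter (fun S => st S = τ)).card := by
    intro τ
    rw [patternCount_eq π π τ id hid st hst]
    simp
  have hfull : ∀ S, π.1 ≤ (st S).1 → S = Finset.univ := by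
    intro S h
    rw [hcard] at h
    exact Finset.eq_univ_of_card S (le_antisymm (Finset.card_le_univ S) (by simpa using h))
  unfold PW deltaP
  rw [hA]
  split_ifs with h
  · subst h
    have : Finset.univ.filter (fun S => st S = σ) = {Finset.univ} := by
      ext S
      simp only [Finset.mem_filter, Finset.mem_univ, true_and, Finset.mem_singleton]
      constructor
      · intro h
        exact hfull S (by rw [h])
      · rintro rfl
        exact huniv
    rw [this]
    simp
  · by_cases hle : π.1 ≤ σ.1
    · have : Finset.univ.filter (fun S => st S = σ) = ∅ := by
        rw [Finset.filter_eq_empty_iff]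
        intro S _ hS
        have := hfull S (by rw [hS]; exact hle)
        subst this
        exact h (hS.symm.trans huniv)
      rw [this]
      simp
    · rw [zero_pow (by omega), zero_mul]

theorem PW_one : PW 1 = PP := by
  funext σ π
  simp [PW, PP]

theorem convPowP_PP (d : ℕ) : convPowP PP d = PW d := by
  induction d with
  | zero => rw [convPowP, Nat.cast_zero, PW_zero]
  | succ d ih =>
    funext σ π
    rw [convPowP, ih, ← PW_one, convP_PW, Nat.cast_succ, add_comm]

/-- For every natural number `d` and all permutations `σ ≤ π`,
`P^d(σ,π) = d^{|π|−|σ|} · binom(π,σ)` (with `0^0 = 1`, so `P^0 = δ`);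
moreover `P` is invertible with two-sided inverse
`P⁻¹(σ,π) = (−1)^{|π|−|σ|} · binom(π,σ)`. -/
theorem convPow_PP_apply :
    (∀ d : ℕ, ∀ σ π : Σ n, Equiv.Perm (Fin n), 0 < patternCount π σ →
      convPowP PP d σ π = (d : ℚ) ^ (π.1 - σ.1) * patternCount π σ) ∧
    (∀ σ π : Σ n, Equiv.Perm (Fin n), convP PP PPinv σ π = deltaP σ π) ∧
    (∀ σ π : Σ n, Equiv.Perm (Fin n), convP PPinv PP σ π = deltaP σ π) := by
  refine ⟨fun d σ π _ => ?_, fun σ π => ?_, fun σ π => ?_⟩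
  · rw [convPowP_PP]
    rfl
  · have := convP_PW 1 (-1) σ π
    rw [add_neg_cancel, PW_zero, PW_one] at this
    exact this
  · have := convP_PW (-1) 1 σ π
    rw [neg_add_cancel, PW_zero, PW_one] at this
    exact this
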